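/- For m ≥ 2, the standard 4-plectic form ψ₀ on ℍᵐ is not the square of a symplectic form: there is no alternating ℝ-bilinear form ω on ℍᵐ (viewed as a 4m-dimensional real vector space) and no nonzero real number t such that for all a, b, c, d ∈ ℍᵐ one has ω(a,b)·ω(c,d) − ω(a,c)·ω(b,d) + ω(a,d)·ω(b,c) = t·ψ₀(a,b,c,d). -/

import Mathlib

/-!
Let `V₀`, `V₁` be two distinct quaternionic coordinate lines of `ℍᵐ`. On each of them `ω ∧ ω` is a
nonzero volume form, whereas `ψ₀` vanishes on any four vectors each lying in `V₀` or in `V₁`, with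
both lines represented. For `f ∈ V₁`, contracting `ω ∧ ω` with `f` and restricting to `V₀` gives
`ω|V₀ ∧ ω(·, f)|V₀ = 0`; since `ω|V₀` is nondegenerate, `ω(·, f)` vanishes on `V₀`
(`pfaffian_mul_eq_zero` is the coordinate form of this). Thus `V₀` and `V₁` are `ω`-orthogonal, so
`ω(a, b) ω(c, d) = 0` for `a, b ∈ V₀` and `c, d ∈ V₁`. But `ω` is nonzero on both lines,
a contradiction.
-/

/-- The determinant of four quaternions with respect to the real basis `(1, i, j, k)`. -/
noncomputable def qdet (a b c d : Quaternion ℝ) : ℝ :=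
  Matrix.det !![a.re, b.re, c.re, d.re;
                a.imI, b.imI, c.imI, d.imI;
                a.imJ, b.imJ, c.imJ, d.imJ;
                a.imK, b.imK, c.imK, d.imK]

/-- Nondegeneracy in dimension four: if `p` is a 2-form with Pfaffian `t` and `p ∧ β = 0`, then the
first coordinate `b₁` of the 1-form `β` satisfies `t * b₁ = 0`. Only the components of `p ∧ β`
that involve the first basis vector are needed. -/
lemma pfaffian_mul_eq_zero {p12 p13 p14 p23 p24 p34 b1 b2 b3 b4 t : ℝ}
    (ht : p12 * p34 - p13 * p24 + p14 * p23 = t)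
    (h123 : p12 * b3 - p13 * b2 + b1 * p23 = 0)
    (h124 : p12 * b4 - p14 * b2 + b1 * p24 = 0)
    (h134 : p13 * b4 - p14 * b3 + b1 * p34 = 0) : t * b1 = 0 := by
  linear_combination (-b1) * ht + p12 * h134 - p13 * h124 + p14 * h123

lemma qdet_eq_zero {a b c d : Quaternion ℝ} (h : a = 0 ∨ b = 0 ∨ c = 0 ∨ d = 0) :
    qdet a b c d = 0 := by
  rcases h with rfl | rfl | rfl | rfl
  · exact Matrix.det_eq_zero_of_column_eq_zero 0 (by intro i; fin_cases i <;> rfl)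
  · exact Matrix.det_eq_zero_of_column_eq_zero 1 (by intro i; fin_cases i <;> rfl)
  · exact Matrix.det_eq_zero_of_column_eq_zero 2 (by intro i; fin_cases i <;> rfl)
  · exact Matrix.det_eq_zero_of_column_eq_zero 3 (by intro i; fin_cases i <;> rfl)

lemma exists_qdet_eq_one : ∃ I J K, qdet 1 I J K = 1 := by
  refine ⟨⟨0, 1, 0, 0⟩, ⟨0, 0, 1, 0⟩, ⟨0, 0, 0, 1⟩, ?_⟩
  have h1 : (1 : Quaternion ℝ) = ⟨1, 0, 0, 0⟩ := rfl
  simp [qdet, h1, Matrix.det_succ_row_zero, Fin.sum_univ_succ]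

/-- For `m ≥ 2`, the standard 4-plectic form `ψ₀` on `ℍᵐ` is not (a nonzero multiple of)
the wedge square `ω ∧ ω` of any alternating real bilinear form `ω` on `ℍᵐ`. -/
theorem stmt_9 (m : ℕ) (hm : 2 ≤ m) :
    ¬ ∃ (ω : (Fin m → Quaternion ℝ) →ₗ[ℝ] (Fin m → Quaternion ℝ) →ₗ[ℝ] ℝ) (t : ℝ),
        (∀ a, ω a a = 0) ∧ t ≠ 0 ∧
        ∀ a b c d : Fin m → Quaternion ℝ,
          ω a b * ω c d - ω a c * ω b d + ω a d * ω b c =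
            t * ∑ i, qdet (a i) (b i) (c i) (d i) := by
  rintro ⟨ω, t, -, ht, H⟩
  obtain ⟨I, J, K, hIJK⟩ := exists_qdet_eq_one
  -- `X i q` is the vector of the `i`-th quaternionic coordinate line with coordinate `q`.
  let X : Fin m → Quaternion ℝ → (Fin m → Quaternion ℝ) := fun i q => Pi.single i q
  have hX : ∀ i l q, l ≠ i → X i q l = 0 := fun i l q h => by simp [X, h]
  have hX' : ∀ i q, X i q i = q := fun i q => by simp [X]
  have hpf : ∀ i, ω (X i 1) (X i I) * ω (X i J) (X i K)
      - ω (X i 1) (X i J) * ω (X i I) (X i K)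
      + ω (X i 1) (X i K) * ω (X i I) (X i J) = t := by
    intro i
    rw [H, Finset.sum_eq_single i]
    · simp only [hX', hIJK, mul_one]
    · intro l _ hl
      exact qdet_eq_zero (Or.inl (hX i l _ hl))
    · simp
  have hne : ∀ i, ∃ q, ω (X i 1) (X i q) ≠ 0 := by
    intro i
    by_contra! h
    have := hpf i
    simp only [h, zero_mul, sub_zero, add_zero] at this
    exact ht this.symm
  have hmix : ∀ i j, i ≠ j → ∀ a b c d,
      ω (X i a) (X i b) * ω (X i c) (X j d) - ω (X i a) (X i c) * ω (X i b) (X j d)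
        + ω (X i a) (X j d) * ω (X i b) (X i c) = 0 := by
    intro i j hij a b c d
    rw [H, Finset.sum_eq_zero, mul_zero]
    intro l _
    by_cases hl : l = i
    · exact qdet_eq_zero (.inr (.inr (.inr (hX j l _ (hl ▸ hij)))))
    · exact qdet_eq_zero (.inl (hX i l _ hl))
  have horth : ∀ i j, i ≠ j → ∀ q, ω (X i 1) (X j q) = 0 := fun i j hij q =>
    (mul_eq_zero.mp (pfaffian_mul_eq_zero (hpf i) (hmix i j hij _ _ _ q) (hmix i j hij _ _ _ q)
      (hmix i j hij _ _ _ q))).resolve_left ht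
  let i : Fin m := ⟨0, by omega⟩
  let j : Fin m := ⟨1, by omega⟩
  have hij : i ≠ j := by simp [i, j]
  obtain ⟨q, hq⟩ := hne i
  obtain ⟨r, hr⟩ := hne j
  have h := H (X i 1) (X i q) (X j 1) (X j r)
  rw [Finset.sum_eq_zero, horth i j hij, horth i j hij] at h
  · simp only [zero_mul, sub_zero, add_zero, mul_zero] at h
    exact (mul_ne_zero hq hr) h
  · intro l _
    by_cases hl : l = i
    · exact qdet_eq_zero (.inr (.inr (.inl (hX j l _ (hl ▸ hij)))))
    · exact qdet_eq_zero (.inl (hX i l _ hl))
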